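/- arXiv:1011.1204 — 3 statements merged into one kernel-verified Lean document; each statement's English description precedes it below -/
import Mathlib

section
/- An algebraic curve in C² has only finitely many critical points: if P is a nonzero square-free polynomial in two complex variables, then the set {(ξ,η) : P(ξ,η) = 0, ∂P/∂ξ(ξ,η) = 0, ∂P/∂η(ξ,η) = 0} is finite. -/
/-!
Let `Q` be an irreducible factor of `P`. If `Q` divided both partial derivatives of `P`, then,
since `Q ^ 2 ∤ P`, the product rule would make `Q` divide both of its own partial derivatives;
these have smaller total degree, so they would vanish and `Q` would be constant
(`eq_C_of_forall_pderiv_eq_zero`). So `Q` fails to divide some partial derivative `G` of `P`.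
An irreducible `Q` with `Q ∤ G` has only finitely many common zeros with `G`: by Gauss's lemma the
two are coprime in `ℂ(ξ)[η]`, so their resultant is a nonzero polynomial in `ξ` lying in the ideal
`(Q, G)` (`exists_mul_add_mul_eq_C`), and the same holds with the variables exchanged; hence both
coordinates of a common zero range over finite sets. Finally, every critical point lies on the zero
set of one of the finitely many irreducible factors of `P`.
-/

open MvPolynomial

/-- Elimination of the outer variable: the ideal generated by an irreducible `f` and a
non-multiple `g` of `f` contains a nonzero constant of the coefficient ring. -/
lemma exists_mul_add_mul_eq_C {R : Type*} [CommRing R] [IsDomain R] [NormalizedGCDMonoid R]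
    {f g : Polynomial R} (hf : Irreducible f) (hfg : ¬ f ∣ g) :
    ∃ r : R, r ≠ 0 ∧ ∃ p q : Polynomial R, f * p + g * q = Polynomial.C r := by
  by_cases h0 : f.natDegree = 0
  · obtain ⟨r, rfl⟩ := Polynomial.natDegree_eq_zero.mp h0
    exact ⟨r, fun h => hf.ne_zero (by simp [h]), 1, 0, by simp⟩
  have hprim : f.IsPrimitive := hf.isPrimitive h0
  let K := FractionRing R
  have hirr : Irreducible (f.map (algebraMap R K)) :=
    hprim.irreducible_iff_irreducible_map_fraction_map.mp hf
  have hcop : IsCoprime (f.map (algebraMap R K)) (g.map (algebraMap R K)) :=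
    (hirr.coprime_iff_not_dvd).mpr fun h => hfg (hprim.dvd_of_fraction_map_dvd_fraction_map h)
  obtain ⟨p, q, -, -, h⟩ := Polynomial.exists_mul_add_mul_eq_C_resultant f g le_rfl le_rfl
    (Or.inl h0)
  refine ⟨_, fun hr => ?_, p, q, h⟩
  have hinj : Function.Injective (algebraMap R K) := IsFractionRing.injective R K
  apply Polynomial.resultant_ne_zero _ _ hcop
  rw [Polynomial.natDegree_map_eq_of_injective hinj, Polynomial.natDegree_map_eq_of_injective hinj,
    Polynomial.resultant_map_map, hr, map_zero]

/-- The first coordinates of the common zeros of an irreducible `Q` and a non-multiple `G`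
are roots of a single nonzero polynomial. -/
lemma exists_isRoot_fst {Q G : MvPolynomial (Fin 2) ℂ} (hQ : Irreducible Q) (h : ¬ Q ∣ G) :
    ∃ r : Polynomial ℂ, r ≠ 0 ∧ ∀ x y : ℂ, eval ![x, y] Q = 0 → eval ![x, y] G = 0 →
      r.IsRoot x := by
  let e := Polynomial.Bivariate.equivMvPolynomial ℂ
  obtain ⟨r, hr, p, q, hpq⟩ := exists_mul_add_mul_eq_C (f := e.symm Q) (g := e.symm G)
    ((MulEquiv.irreducible_iff e.symm).mpr hQ) (fun hd => h ((map_dvd_iff e.symm).mp hd))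
  refine ⟨r, hr, fun x y hxQ hxG => ?_⟩
  have h1 := congrArg (fun t => eval ![x, y] (e t)) hpq
  have h2 : ∀ t : Polynomial ℂ, eval ![x, y] (e (Polynomial.C t)) = t.eval x := by
    intro t
    induction t using Polynomial.induction_on' with
    | add t u ht hu => rw [map_add, map_add, map_add, ht, hu, Polynomial.eval_add]
    | monomial n c => simp [e, Polynomial.Bivariate.equivMvPolynomial]
  simp only [map_add, map_mul, AlgEquiv.apply_symm_apply, hxQ, hxG, zero_mul, add_zero] at h1
  rw [Polynomial.IsRoot, ← h2, ← h1]

lemma finite_common_zeros {Q G : MvPolynomial (Fin 2) ℂ} (hQ : Irreducible Q) (h : ¬ Q ∣ G) :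
    {a : ℂ × ℂ | eval ![a.1, a.2] Q = 0 ∧ eval ![a.1, a.2] G = 0}.Finite := by
  obtain ⟨r, hr, hr'⟩ := exists_isRoot_fst hQ h
  let s := renameEquiv ℂ (Equiv.swap (0 : Fin 2) 1)
  obtain ⟨t, ht, ht'⟩ := exists_isRoot_fst (Q := s Q) (G := s G)
    ((MulEquiv.irreducible_iff s).mpr hQ) (fun hd => h ((map_dvd_iff s).mp hd))
  have hs : ∀ (x y : ℂ) (F : MvPolynomial (Fin 2) ℂ), eval ![y, x] (s F) = eval ![x, y] F := by
    intro x y F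
    simp only [s, renameEquiv_apply, eval_rename]
    congr 2
    ext i
    fin_cases i <;> simp
  refine ((Polynomial.finite_setOfPred_isRoot hr).prod (Polynomial.finite_setOfPred_isRoot ht)).subset ?_
  rintro ⟨x, y⟩ ⟨h1, h2⟩
  exact ⟨hr' x y h1 h2, ht' y x (by rw [hs]; exact h1) (by rw [hs]; exact h2)⟩

lemma eq_C_of_forall_pderiv_eq_zero {σ : Type*} {Q : MvPolynomial σ ℂ}
    (h : ∀ i, pderiv i Q = 0) : Q = C (coeff 0 Q) := by
  classical
  ext m
  rw [coeff_C]
  split_ifs with hm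
  · rw [hm]
  obtain ⟨i, hi⟩ := Finsupp.ne_iff.mp (Ne.symm hm)
  have h1 := coeff_pderiv (i := i) Q (m - Finsupp.single i 1)
  have hle : Finsupp.single i 1 ≤ m := by
    rw [Finsupp.single_le_iff]
    exact Nat.one_le_iff_ne_zero.mpr hi
  rw [h i, coeff_zero, tsub_add_cancel_of_le hle] at h1
  exact (mul_eq_zero.mp h1.symm).resolve_right (Nat.cast_add_one_ne_zero _)

/-- Partial differentiation lowers the total degree, so it never yields a nonzero multiple. -/
lemma pderiv_eq_zero_of_dvd {σ : Type*} {Q : MvPolynomial σ ℂ} {i : σ}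
    (h : Q ∣ pderiv i Q) : pderiv i Q = 0 := by
  by_contra hne
  have h1 := totalDegree_le_of_dvd_of_isDomain h hne
  obtain ⟨m, hm, hd⟩ := Finset.exists_mem_eq_sup (pderiv i Q).support
    (support_nonempty.mpr hne) (fun s => s.sum fun _ e => e)
  have hm' : m + Finsupp.single i 1 ∈ Q.support := by
    rw [mem_support_iff] at hm ⊢
    rw [coeff_pderiv] at hm
    exact left_ne_zero_of_mul hm
  have h2 := le_totalDegree hm'
  rw [Finsupp.sum_add_index' (by simp) (by simp), Finsupp.sum_single_index rfl] at h2
  rw [totalDegree, totalDegree, hd] at h1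
  rw [totalDegree] at h2
  omega

lemma exists_not_dvd_pderiv {σ : Type*} {P Q : MvPolynomial σ ℂ} (hsq : Squarefree P)
    (hQ : Prime Q) (hQP : Q ∣ P) : ∃ i, ¬ Q ∣ pderiv i P := by
  by_contra! hall
  obtain ⟨R, rfl⟩ := hQP
  have hR : ¬ Q ∣ R := fun hd => hQ.not_isUnit (hsq Q (mul_dvd_mul_left Q hd))
  have hQi : ∀ i, pderiv i Q = 0 := by
    intro i
    have h1 := hall i
    rw [pderiv_mul, dvd_add_left (dvd_mul_right _ _)] at h1
    exact pderiv_eq_zero_of_dvd ((hQ.dvd_or_dvd h1).resolve_right hR)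
  have hC := eq_C_of_forall_pderiv_eq_zero hQi
  have hc : coeff 0 Q ≠ 0 := fun h0 => hQ.ne_zero (by rw [hC, h0, C_0])
  exact hQ.not_isUnit (hC ▸ (isUnit_iff_ne_zero.mpr hc).map C)

/-- An algebraic curve in ℂ² has only finitely many critical points: if `P` is a
nonzero squarefree polynomial in two complex variables, then the set of common
zeros of `P` and its two partial derivatives is finite. -/
theorem critical_points_finite (P : MvPolynomial (Fin 2) ℂ)
    (hP : P ≠ 0) (hsq : Squarefree P) :
    {a : ℂ × ℂ | eval ![a.1, a.2] P = 0 ∧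
      eval ![a.1, a.2] (pderiv 0 P) = 0 ∧ eval ![a.1, a.2] (pderiv 1 P) = 0}.Finite := by
  classical
  let F := UniqueFactorizationMonoid.factors P
  have hfin : (⋃ Q ∈ F.toFinset, {a : ℂ × ℂ | eval ![a.1, a.2] Q = 0 ∧
      eval ![a.1, a.2] (pderiv 0 P) = 0 ∧ eval ![a.1, a.2] (pderiv 1 P) = 0}).Finite := by
    refine F.toFinset.finite_toSet.biUnion fun Q hQF => ?_
    have hQF' : Q ∈ F := by simpa using hQF
    have hQ := UniqueFactorizationMonoid.prime_of_factor Q hQF'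
    obtain ⟨i, hi⟩ := exists_not_dvd_pderiv hsq hQ
      (UniqueFactorizationMonoid.dvd_of_mem_factors hQF')
    refine (finite_common_zeros hQ.irreducible hi).subset ?_
    rintro a ⟨h1, h2, h3⟩
    refine ⟨h1, ?_⟩
    fin_cases i
    · exact h2
    · exact h3
  refine hfin.subset ?_
  rintro a ⟨h1, h2, h3⟩
  obtain ⟨u, hu⟩ := UniqueFactorizationMonoid.factors_prod hP
  have hprod : (F.map (eval ![a.1, a.2])).prod = 0 := by
    rw [← hu, map_mul, map_multiset_prod] at h1
    exact (mul_eq_zero.mp h1).resolve_right (u.isUnit.map (eval ![a.1, a.2])).ne_zero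
  obtain ⟨Q, hQF, hQ⟩ := Multiset.mem_map.mp (Multiset.prod_eq_zero_iff.mp hprod)
  simp only [Set.mem_iUnion]
  exact ⟨Q, Multiset.mem_toFinset.mpr hQF, hQ, h2, h3⟩
end

section
/- If f is holomorphic on D × {|w| < r} with Hartogs expansion Σ c_k(z) w^k, and for every z ∈ D the radius of convergence R(z) = 1/limsup |c_k(z)|^{1/k} satisfies R(z) ≥ R₀ > r, then f extends to a holomorphic function on D × {|w| < R₀}. -/
/-!
The extension is the sum of the Hartogs series, `F (z, w) = ∑' k, c k z * w ^ k`. It is holomorphic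
once the pointwise bound `limsup |c k z| ^ (1 / k) ≤ 1 / R₀` is upgraded to a locally uniform one:
for every `s < R₀`, each point of `D` has a neighbourhood on which `|c k z| ≤ s⁻¹ ^ k` for all
large `k`. The series then converges normally, together with its derivatives.

The upgrade is Hartogs' lemma on subharmonic functions, applied directly to the functions
`u k = |c k| ^ (1 / k)` rather than to their logarithms, so that all integrals are integrals of
nonnegative functions.

* `norm_rpow_le_circleAverage`: `|g| ^ p` has the sub-mean value property on circles, by Jensen's
  formula. Averaging over the rotations `v ↦ exp (iθ) v` of a polydisc turns this into the
  sub-mean value property on polydiscs in `ℂⁿ`, `volume_mul_le_lintegral_ball`.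
* `exists_local_coeff_bound`: the holomorphy of `f` and Cauchy's estimates show that the `u k` are
  locally uniformly bounded, which provides the domination needed for the reverse Fatou lemma.
* `exists_uniform_root_bound`: by reverse Fatou, the mean of `u k` over a polydisc of radius `ρ` is
  eventually at most slightly more than `1 / R₀`. For `z` close to the centre, a polydisc around
  `z` of slightly smaller radius is contained in the first one, and the sub-mean value property
  bounds `u k z` uniformly.
* `differentiableOn_tsum_of_bounded`: normally convergent series of holomorphic functions on a
  complex normed space are holomorphic.
-/

open Filter ENNReal

/-! ### Sub-mean value property of powers of holomorphic functions -/

/-- The sub-mean value property of `‖g‖ ^ p`. Jensen's formula gives it for `log ‖g‖`, and the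
inequality `1 + log x ≤ x` transfers it to the power. -/
theorem norm_rpow_le_circleAverage {g : ℂ → ℂ} {p : ℝ} (hp : 0 < p)
    (hg : AnalyticOnNhd ℂ g (Metric.closedBall 0 1)) :
    ‖g 0‖ ^ p ≤ Real.circleAverage (fun ζ => ‖g ζ‖ ^ p) 0 1 := by
  have hcont : ContinuousOn (fun ζ => ‖g ζ‖ ^ p) (Metric.sphere 0 1) :=
    (hg.continuousOn.mono Metric.sphere_subset_closedBall).norm.rpow_const
      fun _ _ => Or.inr hp.le
  have hint : CircleIntegrable (fun ζ => ‖g ζ‖ ^ p) 0 1 := hcont.circleIntegrable zero_le_one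
  rcases eq_or_ne (g 0) 0 with h0 | h0
  · rw [h0, norm_zero, Real.zero_rpow hp.ne']
    exact Real.circleAverage_nonneg_of_nonneg fun _ _ => by positivity
  refine le_of_forall_gt_imp_ge_of_dense fun B hB => ?_
  have hA : 0 ≤ Real.circleAverage (fun ζ => ‖g ζ‖ ^ p) 0 1 :=
    Real.circleAverage_nonneg_of_nonneg fun _ _ => by positivity
  have hB0 : 0 < B := hA.trans_lt hB
  have key : ∀ x : ℝ, 0 < x →
      p * Real.log (Real.exp ((1 - Real.log B) / p) * x) = 1 + Real.log (x ^ p / B) := by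
    intro x hx
    rw [Real.log_mul (Real.exp_ne_zero _) hx.ne', Real.log_exp,
      Real.log_div (Real.rpow_pos_of_pos hx p).ne' hB0.ne', Real.log_rpow hx]
    field_simp
    ring
  -- The normalising factor is chosen so that `p * log ‖m * g‖ ≤ ‖g‖ ^ p / B` also holds at the
  -- zeros of `g`, where `Real.log 0 = 0`.
  set m : ℝ := Real.exp ((1 - Real.log B) / p) with hm
  have hm0 : 0 < m := Real.exp_pos _
  have hG : AnalyticOnNhd ℂ (fun ζ => (m : ℂ) * g ζ) (Metric.closedBall 0 |(1 : ℝ)|) := by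
    rw [abs_one]
    exact analyticOnNhd_const.mul hg
  have hnorm : ∀ ζ, ‖(m : ℂ) * g ζ‖ = m * ‖g ζ‖ := fun ζ => by
    rw [norm_mul, Complex.norm_real, Real.norm_of_nonneg hm0.le]
  have hG0 : (m : ℂ) * g 0 ≠ 0 := mul_ne_zero (by exact_mod_cast hm0.ne') h0
  have hjensen := hG.circleAverage_log_norm one_ne_zero hG0
  -- the zeros of `g` in the disc contribute nonnegatively to Jensen's formula
  have hsum : 0 ≤ ∑ᶠ u, (MeromorphicOn.divisor (fun ζ => (m : ℂ) * g ζ)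
      (Metric.closedBall 0 |(1 : ℝ)|) u : ℝ) * Real.log (1 * ‖(0 : ℂ) - u‖⁻¹) := by
    refine finsum_nonneg fun u => ?_
    by_cases hu : u ∈ Metric.closedBall (0 : ℂ) |(1 : ℝ)|
    · refine mul_nonneg (by exact_mod_cast MeromorphicOn.AnalyticOnNhd.divisor_nonneg hG u) ?_
      rw [one_mul, zero_sub, norm_neg, Real.log_inv, neg_nonneg]
      exact Real.log_nonpos (norm_nonneg _) (by simpa using hu)
    · simp [Function.locallyFinsuppWithin.apply_eq_zero_of_notMem _ hu]
  have hlogint : CircleIntegrable (fun ζ => Real.log ‖(m : ℂ) * g ζ‖) 0 1 :=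
    MeromorphicOn.circleIntegrable_log_norm
      (hG.mono Metric.sphere_subset_closedBall).meromorphicOn
  have hmono : Real.circleAverage (fun ζ => Real.log ‖(m : ℂ) * g ζ‖) 0 1 ≤
      Real.circleAverage (fun ζ => (p * B)⁻¹ • ‖g ζ‖ ^ p) 0 1 := by
    refine Real.circleAverage_mono hlogint (hint.const_smul) fun ζ _ => ?_
    rw [hnorm, smul_eq_mul]
    rcases (norm_nonneg (g ζ)).eq_or_lt with h | h
    · rw [← h, mul_zero, Real.log_zero]
      positivity
    · have h1 := key _ h
      have h2 := Real.log_le_sub_one_of_pos (div_pos (Real.rpow_pos_of_pos h p) hB0)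
      have h3 : p * Real.log (m * ‖g ζ‖) ≤ ‖g ζ‖ ^ p / B := by linarith
      rw [mul_inv, mul_assoc, inv_mul_eq_div, inv_mul_eq_div, le_div_iff₀ hp]
      linarith
  rw [Real.circleAverage_fun_smul, smul_eq_mul] at hmono
  have h4 : p * Real.log (m * ‖g 0‖) ≤ 1 := by
    rw [hnorm] at hjensen
    have h5 : Real.log (m * ‖g 0‖) ≤
        (p * B)⁻¹ * Real.circleAverage (fun ζ => ‖g ζ‖ ^ p) 0 1 := by linarith
    calc p * Real.log (m * ‖g 0‖)
        ≤ p * ((p * B)⁻¹ * Real.circleAverage (fun ζ => ‖g ζ‖ ^ p) 0 1) := by gcongr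
      _ = Real.circleAverage (fun ζ => ‖g ζ‖ ^ p) 0 1 / B := by field_simp
      _ ≤ 1 := (div_le_one hB0).2 hB.le
  have hpos : 0 < ‖g 0‖ := norm_pos_iff.2 h0
  rw [key _ hpos] at h4
  have h6 : Real.log (‖g 0‖ ^ p / B) ≤ 0 := by linarith
  have h7 : 0 < ‖g 0‖ ^ p / B := div_pos (Real.rpow_pos_of_pos hpos p) hB0
  exact (div_le_one hB0).1 ((Real.log_nonpos_iff h7.le).1 h6)

/-- `norm_rpow_le_circleAverage` as an inequality between lower Lebesgue integrals. -/
theorem lintegral_circle_ge {g : ℂ → ℂ} {p : ℝ} (hp : 0 < p)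
    (hg : AnalyticOnNhd ℂ g (Metric.closedBall 0 1)) :
    ENNReal.ofReal (2 * Real.pi) * ‖g 0‖ₑ ^ p ≤
      ∫⁻ θ in Set.Ioc 0 (2 * Real.pi), ‖g (circleMap 0 1 θ)‖ₑ ^ p := by
  have h := norm_rpow_le_circleAverage hp hg
  have hcont : ContinuousOn (fun ζ => ‖g ζ‖ ^ p) (Metric.sphere 0 1) :=
    (hg.continuousOn.mono Metric.sphere_subset_closedBall).norm.rpow_const
      fun _ _ => Or.inr hp.le
  have hint : CircleIntegrable (fun ζ => ‖g ζ‖ ^ p) 0 1 := hcont.circleIntegrable zero_le_one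
  have hconv : ∀ x : ℂ, ‖x‖ₑ ^ p = ENNReal.ofReal (‖x‖ ^ p) := fun x => by
    rw [← ofReal_norm, ENNReal.ofReal_rpow_of_nonneg (norm_nonneg _) hp.le]
  have hpi : (0 : ℝ) < 2 * Real.pi := Real.two_pi_pos
  rw [Real.circleAverage_def, smul_eq_mul, inv_mul_eq_div, le_div_iff₀ hpi,
    intervalIntegral.integral_of_le hpi.le] at h
  simp_rw [hconv]
  rw [← MeasureTheory.ofReal_integral_eq_lintegral_ofReal
      ((intervalIntegrable_iff_integrableOn_Ioc_of_le hpi.le).1 hint)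
      (MeasureTheory.ae_of_all _ fun θ => by positivity), ← ENNReal.ofReal_mul hpi.le]
  exact ENNReal.ofReal_le_ofReal (by linarith)

/-- Balls of `Fin n → ℂ` (polydiscs) and Lebesgue measure are invariant under multiplication of all
coordinates by a complex number of modulus one. -/
theorem lintegral_ball_rotate {n : ℕ} {u : (Fin n → ℂ) → ℝ≥0∞} (hu : Measurable u)
    (z : Fin n → ℂ) (ρ θ : ℝ) :
    ∫⁻ v in Metric.ball 0 ρ, u (z + circleMap 0 1 θ • v) = ∫⁻ x in Metric.ball z ρ, u x := by
  have hnorm : ‖circleMap 0 1 θ‖ = 1 := by simp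
  have hmp : MeasureTheory.MeasurePreserving
      (fun v : Fin n → ℂ => z + circleMap 0 1 θ • v) := by
    refine (MeasureTheory.measurePreserving_add_left MeasureTheory.volume z).comp ?_
    refine MeasureTheory.volume_preserving_pi (f := fun _ x => circleMap 0 1 θ • x) fun _ => ?_
    exact (rotation (⟨circleMap 0 1 θ, by simp [Submonoid.unitSphere]⟩ : Circle)).measurePreserving
  have hpre : (fun v : Fin n → ℂ => z + circleMap 0 1 θ • v) ⁻¹' Metric.ball z ρ =
      Metric.ball 0 ρ := by
    ext v
    simp [norm_smul]
  rw [← hpre]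
  exact hmp.setLIntegral_comp_preimage Metric.isOpen_ball.measurableSet hu

/-- The sub-mean value property of `‖h‖ ^ p` on polydiscs: integrate the one-variable inequality on
the slices `ζ ↦ h (z + ζ • v)` over `v`, and exchange the two integrals. -/
theorem volume_mul_le_lintegral_ball {n : ℕ} {h : (Fin n → ℂ) → ℂ} (hm : Measurable h)
    {z : Fin n → ℂ} {ρ p : ℝ} (hp : 0 < p) (hd : DifferentiableOn ℂ h (Metric.ball z ρ)) :
    MeasureTheory.volume (Metric.ball (0 : Fin n → ℂ) ρ) * ‖h z‖ₑ ^ p ≤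
      ∫⁻ x in Metric.ball z ρ, ‖h x‖ₑ ^ p := by
  have hu : Measurable fun x => ‖h x‖ₑ ^ p := hm.enorm.pow_const p
  have hpi : ENNReal.ofReal (2 * Real.pi) ≠ 0 := by simp [Real.pi_pos]
  rw [← ENNReal.mul_le_mul_iff_right hpi ENNReal.ofReal_ne_top]
  calc ENNReal.ofReal (2 * Real.pi) *
        (MeasureTheory.volume (Metric.ball (0 : Fin n → ℂ) ρ) * ‖h z‖ₑ ^ p)
      = ∫⁻ _ in Metric.ball (0 : Fin n → ℂ) ρ, ENNReal.ofReal (2 * Real.pi) * ‖h z‖ₑ ^ p := by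
        rw [MeasureTheory.setLIntegral_const]; ring
    _ ≤ ∫⁻ v in Metric.ball (0 : Fin n → ℂ) ρ, ∫⁻ θ in Set.Ioc 0 (2 * Real.pi),
          ‖h (z + circleMap 0 1 θ • v)‖ₑ ^ p := by
        refine MeasureTheory.setLIntegral_mono' Metric.isOpen_ball.measurableSet fun v hv => ?_
        rw [mem_ball_zero_iff] at hv
        -- the slice extends to a disc of radius greater than `1`, as `‖v‖ < ρ`
        have hopen : IsOpen {ζ : ℂ | z + ζ • v ∈ Metric.ball z ρ} :=
          Metric.isOpen_ball.preimage (by fun_prop)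
        have hdiff : DifferentiableOn ℂ (fun ζ : ℂ => h (z + ζ • v))
            {ζ : ℂ | z + ζ • v ∈ Metric.ball z ρ} :=
          hd.comp (by fun_prop) fun ζ hζ => hζ
        have hsub : Metric.closedBall (0 : ℂ) 1 ⊆ {ζ : ℂ | z + ζ • v ∈ Metric.ball z ρ} := by
          intro ζ hζ
          rw [mem_closedBall_zero_iff] at hζ
          simp only [Set.mem_ofPred_eq, mem_ball_iff_norm, add_sub_cancel_left, norm_smul]
          nlinarith [norm_nonneg v]
        simpa using lintegral_circle_ge (g := fun ζ : ℂ => h (z + ζ • v)) hp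
          ((hdiff.analyticOnNhd hopen).mono hsub)
    _ = ∫⁻ θ in Set.Ioc 0 (2 * Real.pi), ∫⁻ v in Metric.ball (0 : Fin n → ℂ) ρ,
          ‖h (z + circleMap 0 1 θ • v)‖ₑ ^ p := by
        refine MeasureTheory.lintegral_lintegral_swap (Measurable.aemeasurable ?_)
        refine hu.comp (Continuous.measurable ?_)
        fun_prop
    _ = ENNReal.ofReal (2 * Real.pi) * ∫⁻ x in Metric.ball z ρ, ‖h x‖ₑ ^ p := by
        simp_rw [lintegral_ball_rotate hu]
        rw [MeasureTheory.setLIntegral_const, Real.volume_Ioc, sub_zero, mul_comm]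

/-! ### Hartogs' lemma on upper limits -/

/-- Hartogs' lemma: a pointwise bound `a` on the upper limit of the locally bounded functions
`‖c k‖ ^ (1 / k)` becomes an eventual uniform bound by any `b > a` near `z₀`. -/
theorem exists_uniform_root_bound {n : ℕ} {c : ℕ → (Fin n → ℂ) → ℂ} (hm : ∀ k, Measurable (c k))
    {z₀ : Fin n → ℂ} {ρ : ℝ} (hρ : 0 < ρ)
    (hd : ∀ k, DifferentiableOn ℂ (c k) (Metric.ball z₀ ρ))
    {M : ℝ≥0∞} (hM : M ≠ ∞) (hb : ∀ k, ∀ z ∈ Metric.ball z₀ ρ, ‖c k z‖ₑ ^ ((k : ℝ)⁻¹) ≤ M)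
    {a b : ℝ} (ha : 0 ≤ a) (hab : a < b)
    (hlim : ∀ z ∈ Metric.ball z₀ ρ,
      limsup (fun k : ℕ => ‖c k z‖ₑ ^ ((k : ℝ)⁻¹)) atTop ≤ ENNReal.ofReal a) :
    ∃ δ > 0, ∃ K : ℕ, ∀ k ≥ K, ∀ z ∈ Metric.ball z₀ δ,
      ‖c k z‖ₑ ^ ((k : ℝ)⁻¹) ≤ ENNReal.ofReal b := by
  let V : ℝ → ℝ≥0∞ := fun s => MeasureTheory.volume (Metric.ball (0 : Fin n → ℂ) s)
  have hV : ∀ s : ℝ, 0 < s → V s ≠ 0 ∧ V s ≠ ∞ := fun s hs =>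
    ⟨(Metric.measure_ball_pos _ _ hs).ne', MeasureTheory.measure_ball_lt_top.ne⟩
  -- `δ` is so small that passing from radius `ρ` to `ρ - δ` raises the mean value bound `a` to
  -- less than `b`
  obtain ⟨δ, hδ0, hδρ, hδ⟩ : ∃ δ : ℝ, 0 < δ ∧ δ < ρ ∧
      ENNReal.ofReal a * V ρ < ENNReal.ofReal b * V (ρ - δ) := by
    set d := Module.finrank ℝ (Fin n → ℂ)
    have hcont : ContinuousAt (fun δ : ℝ => b * (ρ - δ) ^ d) 0 := by fun_prop
    have hlt : a * ρ ^ d < b * (ρ - 0) ^ d := by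
      rw [sub_zero]; exact mul_lt_mul_of_pos_right hab (pow_pos hρ d)
    have hev := (hcont.eventually_const_lt hlt).and (gt_mem_nhds hρ)
    obtain ⟨δ, ⟨h1, h2⟩, h3⟩ :=
      ((hev.filter_mono nhdsWithin_le_nhds).and (self_mem_nhdsWithin (s := Set.Ioi (0 : ℝ)))).exists
    refine ⟨δ, h3, h2, ?_⟩
    have hsc : ∀ s : ℝ, 0 < s → V s = ENNReal.ofReal (s ^ d) * V 1 := fun s hs =>
      MeasureTheory.Measure.addHaar_ball_of_pos _ _ hs
    rw [hsc ρ hρ, hsc (ρ - δ) (by linarith), ← mul_assoc, ← mul_assoc, ← ENNReal.ofReal_mul ha,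
      ← ENNReal.ofReal_mul (ha.trans hab.le)]
    refine (ENNReal.mul_lt_mul_iff_left (hV 1 one_pos).1 (hV 1 one_pos).2).2 ?_
    exact (ENNReal.ofReal_lt_ofReal_iff_of_nonneg (by positivity)).2 h1
  have hball : MeasureTheory.volume (Metric.ball z₀ ρ) = V ρ :=
    MeasureTheory.Measure.addHaar_ball_center _ _ _
  have hmeas : ∀ k : ℕ, Measurable fun x => ‖c k x‖ₑ ^ ((k : ℝ)⁻¹) :=
    fun k => (hm k).enorm.pow_const _
  have hfatou : limsup (fun k : ℕ => ∫⁻ x in Metric.ball z₀ ρ, ‖c k x‖ₑ ^ ((k : ℝ)⁻¹)) atTop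
      < ENNReal.ofReal b * V (ρ - δ) := by
    refine lt_of_le_of_lt ?_ hδ
    refine (MeasureTheory.limsup_lintegral_le (fun _ => M) hmeas (fun k => ?_) ?_).trans ?_
    · exact (MeasureTheory.ae_restrict_iff' Metric.isOpen_ball.measurableSet).2
        (MeasureTheory.ae_of_all _ (hb k))
    · rw [MeasureTheory.setLIntegral_const, hball]
      exact ENNReal.mul_ne_top hM (hV ρ hρ).2
    · rw [← hball, ← MeasureTheory.setLIntegral_const]
      exact MeasureTheory.setLIntegral_mono' Metric.isOpen_ball.measurableSet hlim
  obtain ⟨K, hK⟩ := eventually_atTop.1 (eventually_lt_of_limsup_lt hfatou)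
  refine ⟨δ, hδ0, max K 1, fun k hk z hz => ?_⟩
  have hk1 : 1 ≤ k := (le_max_right K 1).trans hk
  have hsub : Metric.ball z (ρ - δ) ⊆ Metric.ball z₀ ρ :=
    Metric.ball_subset_ball' (by rw [Metric.mem_ball] at hz; linarith)
  have hs := hV (ρ - δ) (by linarith)
  refine (ENNReal.mul_le_mul_iff_right hs.1 hs.2).1 ?_
  calc V (ρ - δ) * ‖c k z‖ₑ ^ ((k : ℝ)⁻¹)
      ≤ ∫⁻ x in Metric.ball z (ρ - δ), ‖c k x‖ₑ ^ ((k : ℝ)⁻¹) :=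
        volume_mul_le_lintegral_ball (hm k) (by positivity) ((hd k).mono hsub)
    _ ≤ ∫⁻ x in Metric.ball z₀ ρ, ‖c k x‖ₑ ^ ((k : ℝ)⁻¹) :=
        MeasureTheory.lintegral_mono_set hsub
    _ ≤ V (ρ - δ) * ENNReal.ofReal b := by
        rw [mul_comm]; exact (hK k ((le_max_left K 1).trans hk)).le

/-! ### Normally convergent series -/

/-- A normally convergent series of holomorphic functions is holomorphic: by the Schwarz lemma the
derivatives are summably bounded near each point. -/
theorem differentiableOn_tsum_of_bounded {E : Type*} [NormedAddCommGroup E] [NormedSpace ℂ E]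
    {h : ℕ → E → ℂ} {W : Set E} (hW : IsOpen W) (hd : ∀ k, DifferentiableOn ℂ (h k) W)
    {u : ℕ → ℝ} (hu : Summable u) (hb : ∀ k, ∀ x ∈ W, ‖h k x‖ ≤ u k) :
    DifferentiableOn ℂ (fun x => ∑' k, h k x) W := by
  intro x hx
  obtain ⟨ε, hε, hεW⟩ := Metric.isOpen_iff.1 hW x hx
  set η := ε / 2 with hη
  have hη0 : 0 < η := by positivity
  have hsub : ∀ y ∈ Metric.ball x η, Metric.ball y η ⊆ W := fun y hy =>
    (Metric.ball_subset_ball' (by rw [Metric.mem_ball] at hy; linarith)).trans hεW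
  have hxη : x ∈ Metric.ball x η := Metric.mem_ball_self hη0
  let _ : NormedSpace ℝ E := NormedSpace.restrictScalars ℝ ℂ E
  refine (hasFDerivAt_tsum_of_isPreconnected (f := h) (f' := fun k => fderiv ℂ (h k))
    (u := fun k => 2 * u k / η) ((hu.mul_left 2).div_const η) Metric.isOpen_ball
    (convex_ball x η).isPreconnected (fun k y hy => ?_) (fun k y hy => ?_) hxη ?_
    hxη).differentiableAt.differentiableWithinAt
  · have hyW : y ∈ W := hsub y hy (Metric.mem_ball_self hη0)
    exact ((hd k).differentiableAt (hW.mem_nhds hyW)).hasFDerivAt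
  · refine Complex.norm_fderiv_le_div_of_mapsTo_ball ((hd k).mono (hsub y hy)) (fun v hv => ?_) hη0
    rw [mem_closedBall_iff_norm]
    have h1 := hb k v (hsub y hy hv)
    have h2 := hb k y (hsub y hy (Metric.mem_ball_self hη0))
    linarith [norm_sub_le (h k v) (h k y)]
  · exact Summable.of_norm_bounded hu fun k => hb k x hx

/-! ### Bounds on the Hartogs coefficients -/

/-- Cauchy's estimates for the coefficients of a convergent power series expansion. -/
theorem norm_coeff_le {g : ℂ → ℂ} {a : ℕ → ℂ} {s C : ℝ} (hs : 0 < s)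
    (hd : DifferentiableOn ℂ g (Metric.closedBall 0 s))
    (hC : ∀ w ∈ Metric.closedBall (0 : ℂ) s, ‖g w‖ ≤ C)
    (hsum : ∀ w : ℂ, ‖w‖ < s → HasSum (fun k => a k * w ^ k) (g w)) (k : ℕ) :
    ‖a k‖ ≤ C * s⁻¹ ^ k := by
  lift s to NNReal using hs.le
  have h1 : HasFPowerSeriesAt g (cauchyPowerSeries g 0 s) 0 :=
    (hd.hasFPowerSeriesOnBall (by exact_mod_cast hs)).hasFPowerSeriesAt
  have h2 : HasFPowerSeriesAt g (FormalMultilinearSeries.ofScalars ℂ a) 0 := by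
    rw [hasFPowerSeriesAt_iff]
    filter_upwards [Metric.ball_mem_nhds (0 : ℂ) hs] with w hw
    have := hsum w (by simpa using hw)
    simpa [mul_comm] using this
  have h3 := h2.eq_formalMultilinearSeries h1
  have h4 : ‖a k‖ = ‖cauchyPowerSeries g 0 s k‖ := by
    rw [← h3]
    simp
  rw [h4]
  refine (norm_cauchyPowerSeries_le g 0 s k).trans ?_
  rw [abs_of_pos hs]
  gcongr
  have hle : ∫ θ : ℝ in 0..2 * Real.pi, ‖g (circleMap 0 s θ)‖ ≤ ∫ θ : ℝ in 0..2 * Real.pi, C := by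
    have hmem : ∀ θ, circleMap 0 (s : ℝ) θ ∈ Metric.closedBall (0 : ℂ) s :=
      fun θ => circleMap_mem_closedBall 0 hs.le θ
    refine intervalIntegral.integral_mono_on Real.two_pi_pos.le ?_ (by simp) fun θ _ => hC _ (hmem θ)
    refine Continuous.intervalIntegrable ?_ _ _
    exact (hd.continuousOn.comp_continuous (by fun_prop) hmem).norm
  rw [intervalIntegral.integral_const, smul_eq_mul, sub_zero] at hle
  rw [inv_mul_le_iff₀ Real.two_pi_pos]
  exact hle

/-- Geometric bounds on the Hartogs coefficients, uniform near `z₀`: Cauchy's estimates in `w` on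
the circle of radius `r / 2`, where `f` is bounded by compactness. -/
theorem exists_local_coeff_bound {n : ℕ} {D : Set (Fin n → ℂ)} (hD : IsOpen D) {r : ℝ}
    (hr : 0 < r) {f : (Fin n → ℂ) × ℂ → ℂ}
    (hf : DifferentiableOn ℂ f (D ×ˢ Metric.ball (0 : ℂ) r)) {c : ℕ → (Fin n → ℂ) → ℂ}
    (hexp : ∀ z ∈ D, ∀ w : ℂ, ‖w‖ < r → HasSum (fun k : ℕ => c k z * w ^ k) (f (z, w)))
    {z₀ : Fin n → ℂ} (hz₀ : z₀ ∈ D) :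
    ∃ ρ > 0, Metric.ball z₀ ρ ⊆ D ∧ ∃ C ≥ 1, ∃ N ≥ 1, ∀ k : ℕ, ∀ z ∈ Metric.ball z₀ ρ,
      ‖c k z‖ ≤ C * N ^ k := by
  obtain ⟨ρ, hρ, hρD⟩ := Metric.nhds_basis_closedBall.mem_iff.1 (hD.mem_nhds hz₀)
  have hsr : Metric.closedBall (0 : ℂ) (r / 2) ⊆ Metric.ball 0 r :=
    Metric.closedBall_subset_ball (by linarith)
  have hcomp : IsCompact (Metric.closedBall z₀ ρ ×ˢ Metric.closedBall (0 : ℂ) (r / 2)) :=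
    (isCompact_closedBall _ _).prod (isCompact_closedBall _ _)
  obtain ⟨C, hC⟩ := hcomp.exists_bound_of_continuousOn
    (hf.continuousOn.mono (Set.prod_mono hρD hsr))
  refine ⟨ρ, hρ, Metric.ball_subset_closedBall.trans hρD, max C 1, le_max_right _ _,
    max (r / 2)⁻¹ 1, le_max_right _ _, fun k z hz => ?_⟩
  have hzc := Metric.ball_subset_closedBall hz
  have hzD := hρD hzc
  have hdz : DifferentiableOn ℂ (fun w => f (z, w)) (Metric.closedBall 0 (r / 2)) :=
    hf.comp (by fun_prop) fun w hw => ⟨hzD, hsr hw⟩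
  refine (norm_coeff_le (half_pos hr) hdz (fun w hw => hC (z, w) ⟨hzc, hw⟩)
    (fun w hw => hexp z hzD w (by linarith)) k).trans ?_
  gcongr
  · exact le_max_left _ _
  · exact le_max_left _ _

/-- Near `z₀` the Hartogs coefficients have a uniform bound `A k`, equal to `s⁻¹ ^ k` for all
large `k`, whenever `s < R₀`. -/
theorem hartogs_local {n : ℕ} {D : Set (Fin n → ℂ)} (hD : IsOpen D) {r R₀ : ℝ} (hr : 0 < r)
    {f : (Fin n → ℂ) × ℂ → ℂ}
    (hf : DifferentiableOn ℂ f (D ×ˢ Metric.ball (0 : ℂ) r))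
    {c : ℕ → (Fin n → ℂ) → ℂ} (hc : ∀ k, DifferentiableOn ℂ (c k) D)
    (hexp : ∀ z ∈ D, ∀ w : ℂ, ‖w‖ < r → HasSum (fun k : ℕ => c k z * w ^ k) (f (z, w)))
    (hrad : ∀ z ∈ D,
      limsup (fun k : ℕ => ‖c k z‖ₑ ^ ((k : ℝ)⁻¹)) atTop ≤ 1 / ENNReal.ofReal R₀)
    {z₀ : Fin n → ℂ} (hz₀ : z₀ ∈ D) {s : ℝ} (hs : 0 < s) (hsR : s < R₀) :
    ∃ δ > 0, Metric.ball z₀ δ ⊆ D ∧ ∃ A : ℕ → ℝ, ∃ K : ℕ, (∀ k ≥ K, A k = s⁻¹ ^ k) ∧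
      ∀ k, ∀ z ∈ Metric.ball z₀ δ, ‖c k z‖ ≤ A k := by
  obtain ⟨ρ, hρ, hρD, C, hC1, N, hN1, hCN⟩ := exists_local_coeff_bound hD hr hf hexp hz₀
  have hR0 : 0 < R₀ := hs.trans hsR
  -- extension by zero outside `D`, which makes the coefficients measurable on the whole space
  let c' : ℕ → (Fin n → ℂ) → ℂ := fun k => D.indicator (c k)
  have hcc : ∀ k, ∀ z ∈ D, c' k z = c k z := fun k z hz => Set.indicator_of_mem hz _
  have hm : ∀ k, Measurable (c' k) := fun k => by
    classical
    change Measurable (D.indicator (c k))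
    rw [← Set.piecewise_eq_indicator]
    exact (hc k).continuousOn.measurable_piecewise (g := 0) continuousOn_const hD.measurableSet
  have hroot : ∀ k : ℕ, ∀ z ∈ Metric.ball z₀ ρ,
      ‖c' k z‖ₑ ^ ((k : ℝ)⁻¹) ≤ ENNReal.ofReal (C * N) := by
    intro k z hz
    have hCN1 : 1 ≤ C * N := one_le_mul_of_one_le_of_one_le hC1 hN1
    rcases Nat.eq_zero_or_pos k with rfl | hk
    · simpa using hCN1
    rw [hcc k z (hρD hz), ENNReal.rpow_inv_le_iff (by positivity), ENNReal.rpow_natCast,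
      ← ENNReal.ofReal_pow (by positivity), ← ofReal_norm]
    refine ENNReal.ofReal_le_ofReal ((hCN k z hz).trans ?_)
    rw [mul_pow]
    gcongr
    exact le_self_pow₀ hC1 hk.ne'
  obtain ⟨δ, hδ, K, hK⟩ := exists_uniform_root_bound hm hρ
    (fun k => ((hc k).mono hρD).congr fun z hz => hcc k z (hρD hz)) ENNReal.ofReal_ne_top hroot
    (a := R₀⁻¹) (b := s⁻¹) (by positivity) (by gcongr) (fun z hz => by
      simp_rw [hcc _ z (hρD hz)]
      rw [ENNReal.ofReal_inv_of_pos hR0, ← one_div]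
      exact hrad z (hρD hz))
  have hsub : Metric.ball z₀ (min δ ρ) ⊆ Metric.ball z₀ ρ :=
    Metric.ball_subset_ball (min_le_right _ _)
  classical
  refine ⟨min δ ρ, lt_min hδ hρ, hsub.trans hρD,
    fun k => if max K 1 ≤ k then s⁻¹ ^ k else C * N ^ k, max K 1, fun k hk => if_pos hk,
    fun k z hz => ?_⟩
  dsimp only
  split_ifs with hk
  · have hk1 : 0 < k := (le_max_right K 1).trans hk
    have h := hK k ((le_max_left K 1).trans hk) z
      (Metric.ball_subset_ball (min_le_left _ _) hz)
    rw [hcc k z (hρD (hsub hz)), ENNReal.rpow_inv_le_iff (by positivity), ENNReal.rpow_natCast,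
      ← ENNReal.ofReal_pow (by positivity), ← ofReal_norm,
      ENNReal.ofReal_le_ofReal_iff (by positivity)] at h
    exact h
  · exact hCN k z (hsub hz)

/-! ### Continuation -/

/-- Classical Hartogs continuation lemma: if `f` is holomorphic on `D × {|w| < r}`
with Hartogs expansion `Σ c_k(z) wᵏ` and the fiberwise radius of convergence
satisfies `R(z) ≥ R₀ > r` for every `z ∈ D`, then `f` extends holomorphically
to `D × {|w| < R₀}`. -/
theorem hartogs_continuation {n : ℕ} (D : Set (Fin n → ℂ))
    (hD : IsOpen D) (hDconn : IsConnected D) (r R₀ : ℝ) (hr : 0 < r) (hrR : r < R₀)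
    (f : (Fin n → ℂ) × ℂ → ℂ)
    (hf : DifferentiableOn ℂ f (D ×ˢ Metric.ball (0 : ℂ) r))
    (c : ℕ → (Fin n → ℂ) → ℂ) (hc : ∀ k, DifferentiableOn ℂ (c k) D)
    (hexp : ∀ z ∈ D, ∀ w : ℂ, ‖w‖ < r → HasSum (fun k : ℕ => c k z * w ^ k) (f (z, w)))
    (hrad : ∀ z ∈ D,
      limsup (fun k : ℕ => (‖c k z‖₊ : ℝ≥0∞) ^ ((k : ℝ)⁻¹)) atTop ≤ 1 / ENNReal.ofReal R₀) :
    ∃ F : (Fin n → ℂ) × ℂ → ℂ,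
      DifferentiableOn ℂ F (D ×ˢ Metric.ball (0 : ℂ) R₀) ∧
      Set.EqOn F f (D ×ˢ Metric.ball (0 : ℂ) r) := by
  refine ⟨fun x => ∑' k, c k x.1 * x.2 ^ k, ?_, ?_⟩
  · rintro ⟨z₀, w₀⟩ ⟨hz₀, hw₀⟩
    simp only [mem_ball_zero_iff] at hz₀ hw₀
    obtain ⟨t, hwt, htR⟩ := exists_between hw₀
    obtain ⟨s, hts, hsR⟩ := exists_between htR
    have ht : 0 < t := (norm_nonneg _).trans_lt hwt
    have hs : 0 < s := ht.trans hts
    obtain ⟨δ, hδ, hδD, A, K, hAK, hA⟩ := hartogs_local hD hr hf hc hexp hrad hz₀ hs hsR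
    have hsum : Summable fun k => A k * t ^ k := by
      have hgeo : Summable fun k : ℕ => (t / s) ^ k :=
        summable_geometric_of_lt_one (by positivity) ((div_lt_one hs).2 hts)
      rw [← summable_nat_add_iff K] at hgeo ⊢
      refine hgeo.congr fun k => ?_
      rw [hAK _ (Nat.le_add_left K k), ← mul_pow, div_eq_inv_mul]
    have hopen : IsOpen (Metric.ball z₀ δ ×ˢ Metric.ball (0 : ℂ) t) :=
      Metric.isOpen_ball.prod Metric.isOpen_ball
    have hmem : (z₀, w₀) ∈ Metric.ball z₀ δ ×ˢ Metric.ball (0 : ℂ) t :=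
      ⟨Metric.mem_ball_self hδ, by simpa using hwt⟩
    have hdiff := differentiableOn_tsum_of_bounded hopen
      (h := fun k (x : (Fin n → ℂ) × ℂ) => c k x.1 * x.2 ^ k) (fun k => ?_) hsum (fun k x hx => ?_)
    · exact (hdiff.differentiableAt (hopen.mem_nhds hmem)).differentiableWithinAt
    · refine DifferentiableOn.mul ?_ (by fun_prop)
      exact (hc k).comp (by fun_prop) fun x hx => hδD hx.1
    · rw [norm_mul, norm_pow]
      have h1 := hA k x.1 hx.1
      have h2 : ‖x.2‖ ≤ t := (mem_ball_zero_iff.1 hx.2).le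
      gcongr
      exact (norm_nonneg _).trans h1
  · rintro ⟨z, w⟩ ⟨hz, hw⟩
    exact (hexp z hz w (by simpa using hw)).tsum_eq
end

section
/- If S is a closed subset of a domain D × V (D ⊂ Cⁿ, V ⊂ C open) such that for every z in a set E ⊂ D the fiber S_z is empty, and f is holomorphic on (D × V) \ S with f bounded on a neighborhood of each point of S, then f extends holomorphically to D × V provided each fiber ({z} × V) \ S_z is connected and S_z is finite for all z. -/
/-!
On each fiber `{z} × V` the bounded holomorphic function `f (z, ·)` has only finitely many
singularities, so Riemann's theorem extends it to all of `V`
(`differentiableAt_fiberExtension`). These fiberwise extensions are jointly holomorphic: around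
`(z₀, w₀)` choose a circle `|ζ - w₀| = r` in `V` missing the finite fiber `S_{z₀}`. Since `S` is
relatively closed and the circle is compact, the same circle misses `S_z` for `z` near `z₀`, and
Cauchy's formula on the fiber writes the extension as
`(2πi)⁻¹ ∮ (ζ - w)⁻¹ f (z, ζ) dζ`. The integrand is holomorphic in `(z, w)` for `ζ` on the circle,
so the integral is holomorphic in `(z, w)` (`differentiableAt_circleIntegral_param`).
-/

open Metric Set Filter Topology

/-- A circle integral depends holomorphically on a parameter if the integrand is jointly
holomorphic near the circle. The domination needed to differentiate under the integral sign comes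
from the Schwarz lemma, since the integrand is uniformly bounded on a tube around the circle. -/
theorem differentiableAt_circleIntegral_param {E : Type*} [NormedAddCommGroup E]
    [NormedSpace ℂ E] [FiniteDimensional ℂ E] {W : Set (E × ℂ)} (hW : IsOpen W)
    {g : E × ℂ → ℂ} (hg : DifferentiableOn ℂ g W) {x₀ : E} {c : ℂ} {r : ℝ} (hr : 0 ≤ r)
    (h0 : ∀ ζ ∈ sphere c r, (x₀, ζ) ∈ W) :
    DifferentiableAt ℂ (fun x => ∮ ζ in C(c, r), g (x, ζ)) x₀ := by
  have hgd : ∀ q ∈ W, DifferentiableAt ℂ g q := fun q hq => hg.differentiableAt (hW.mem_nhds hq)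
  have hslice : ∀ x, (∀ ζ ∈ sphere c r, (x, ζ) ∈ W) →
      ContinuousOn (fun ζ => g (x, ζ)) (sphere c r) := fun x hx =>
    hg.continuousOn.comp (by fun_prop) hx
  obtain ⟨M, hM⟩ := (isCompact_sphere c r).exists_bound_of_continuousOn (hslice x₀ h0)
  have hev : ∀ᶠ x in 𝓝 x₀, ∀ ζ ∈ sphere c r, (x, ζ) ∈ W ∧ ‖g (x, ζ)‖ < M + 1 := by
    refine (isCompact_sphere c r).eventually_forall_of_forall_eventually
      (P := fun x ζ => (x, ζ) ∈ W ∧ ‖g (x, ζ)‖ < M + 1) fun ζ hζ => ?_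
    have h1 : ∀ᶠ q in 𝓝 (x₀, ζ), ‖g q‖ < M + 1 :=
      (hgd _ (h0 ζ hζ)).continuousAt.norm.eventually_lt_const
        (lt_of_le_of_lt (hM ζ hζ) (lt_add_one M))
    filter_upwards [hW.mem_nhds (h0 ζ hζ), h1] with q hq1 hq2
    exact ⟨hq1, hq2⟩
  obtain ⟨ε, hε, hball⟩ := Metric.eventually_nhds_iff_ball.1 hev
  have hcm : ∀ θ, circleMap c r θ ∈ sphere c r := circleMap_mem_sphere c hr
  have hCI : ∀ x ∈ ball x₀ ε, IntervalIntegrable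
      (fun θ => deriv (circleMap c r) θ • g (x, circleMap c r θ))
      MeasureTheory.volume 0 (2 * Real.pi) := fun x hx =>
    ((hslice x fun ζ hζ => (hball x hx ζ hζ).1).circleIntegrable hr).out
  have hsub : ball x₀ (ε / 2) ⊆ ball x₀ ε := ball_subset_ball (by linarith)
  have hfd : ∀ θ, ∀ x ∈ ball x₀ ε, HasFDerivAt (fun x => g (x, circleMap c r θ))
      ((fderiv ℂ g (x, circleMap c r θ)).comp (ContinuousLinearMap.inl ℂ E ℂ)) x := by
    intro θ x hx
    exact HasFDerivAt.comp x (f := fun x => (x, circleMap c r θ))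
      (hgd _ (hball x hx _ (hcm θ)).1).hasFDerivAt (hasFDerivAt_prodMk_left x _)
  borelize E
  have hsecond : SecondCountableTopology E :=
    haveI := FiniteDimensional.proper ℂ E
    inferInstance
  have hsc : SecondCountableTopology (E →L[ℂ] ℂ) :=
    haveI := FiniteDimensional.proper ℂ (E →L[ℂ] ℂ)
    inferInstance
  refine (intervalIntegral.hasFDerivAt_integral_of_dominated_of_fderiv_le
    (μ := MeasureTheory.volume)
    (F := fun x θ => deriv (circleMap c r) θ • g (x, circleMap c r θ))
    (F' := fun x θ => deriv (circleMap c r) θ •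
      ((fderiv ℂ g (x, circleMap c r θ)).comp (ContinuousLinearMap.inl ℂ E ℂ)))
    (bound := fun _ => r * ((2 * (M + 1)) / (ε / 2)))
    (ball_mem_nhds x₀ (half_pos hε)) ?_ (hCI x₀ (mem_ball_self hε)) ?_ ?_ ?_ ?_).differentiableAt
  · filter_upwards [ball_mem_nhds x₀ hε] with x hx
    exact (intervalIntegrable_iff.1 (hCI x hx)).aestronglyMeasurable
  · apply Measurable.aestronglyMeasurable
    have h1 : Measurable fun θ => fderiv ℂ g (x₀, circleMap c r θ) :=
      (measurable_fderiv ℂ g).comp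
        ((continuous_const.prodMk (continuous_circleMap c r)).measurable)
    have h2 : Continuous fun L : (E × ℂ) →L[ℂ] ℂ => L.comp (ContinuousLinearMap.inl ℂ E ℂ) := by
      fun_prop
    have h3 : Measurable fun θ => deriv (circleMap c r) θ := by
      simp only [deriv_circleMap]
      exact Continuous.measurable (by fun_prop)
    exact h3.smul (h2.measurable.comp h1)
  · refine Eventually.of_forall fun θ _ x hx => ?_
    -- the half ball around `x` stays in the tube where `g` is bounded by `M + 1`
    have hx2 : ball x (ε / 2) ⊆ ball x₀ ε := ball_subset_ball' (by
      have := mem_ball.1 hx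
      linarith)
    have hxx : x ∈ ball x₀ ε := hsub hx
    have key := Complex.norm_fderiv_le_div_of_mapsTo_ball
      (f := fun x => g (x, circleMap c r θ)) (c := x) (R₁ := ε / 2) (R₂ := 2 * (M + 1))
      (fun y hy => (hfd θ y (hx2 hy)).differentiableAt.differentiableWithinAt)
      (fun y hy => by
        rw [mem_closedBall, dist_eq_norm]
        have a := (hball y (hx2 hy) _ (hcm θ)).2
        have b := (hball x hxx _ (hcm θ)).2
        have d := norm_sub_le (g (y, circleMap c r θ)) (g (x, circleMap c r θ))
        linarith) (half_pos hε)
    rw [(hfd θ x hxx).fderiv] at key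
    rw [norm_smul]
    have hd : ‖deriv (circleMap c r) θ‖ = r := by
      simp [deriv_circleMap, abs_of_nonneg hr]
    rw [hd]
    gcongr
  · exact intervalIntegrable_const
  · exact Eventually.of_forall fun θ _ x hx => (hfd θ x (hsub hx)).fun_const_smul _

/-- The fiberwise extension of `f` across `S`: on `S`, the limit of `f` along the punctured
fiber; off `S`, the function `f` itself. -/
noncomputable def fiberExtension {X : Type*} (S : Set (X × ℂ)) (f : X × ℂ → ℂ) (p : X × ℂ) : ℂ :=
  open Classical in if p ∈ S then limUnder (𝓝[≠] p.2) (fun w => f (p.1, w)) else f p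

theorem fiberExtension_of_notMem {X : Type*} {S : Set (X × ℂ)} {f : X × ℂ → ℂ} {p : X × ℂ}
    (hp : p ∉ S) : fiberExtension S f p = f p := if_neg hp

/-- Riemann's removable singularity theorem on a fiber. -/
theorem differentiableAt_fiberExtension {X : Type*} [NormedAddCommGroup X] [NormedSpace ℂ X]
    {D : Set X} {V : Set ℂ} {S : Set (X × ℂ)} {f : X × ℂ → ℂ} (hV : IsOpen V)
    (hΩ : IsOpen (D ×ˢ V \ S)) {z : X} (hz : z ∈ D)
    (hfin : {w : ℂ | (z, w) ∈ S}.Finite)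
    (hf : DifferentiableOn ℂ f (D ×ˢ V \ S))
    (hbdd : ∀ p ∈ S, ∃ U ∈ 𝓝 p, ∃ M : ℝ, ∀ q ∈ U ∩ (D ×ˢ V \ S), ‖f q‖ ≤ M)
    {w : ℂ} (hw : w ∈ V) :
    DifferentiableAt ℂ (fun ζ => fiberExtension S f (z, ζ)) w := by
  have hfd : ∀ ζ ∈ V, (z, ζ) ∉ S → DifferentiableAt ℂ (fun ζ => f (z, ζ)) ζ := fun ζ hζ hS =>
    DifferentiableAt.comp ζ (f := fun ζ => (z, ζ))
      (hf.differentiableAt (hΩ.mem_nhds ⟨⟨hz, hζ⟩, hS⟩)) (by fun_prop)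
  have hN : V ∩ ({ζ : ℂ | (z, ζ) ∈ S} \ {w})ᶜ ∈ 𝓝 w :=
    inter_mem (hV.mem_nhds hw)
      ((hfin.subset sdiff_subset).isClosed.isOpen_compl.mem_nhds fun h => h.2 rfl)
  by_cases hwS : (z, w) ∈ S
  · obtain ⟨U, hU, M, hM⟩ := hbdd _ hwS
    have hU' : (fun ζ => (z, ζ)) ⁻¹' U ∈ 𝓝 w :=
      (show ContinuousAt (fun ζ : ℂ => (z, ζ)) w by fun_prop).preimage_mem_nhds hU
    set N := (V ∩ ({ζ : ℂ | (z, ζ) ∈ S} \ {w})ᶜ) ∩ (fun ζ => (z, ζ)) ⁻¹' U with hNdef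
    have hN' : N ∈ 𝓝 w := inter_mem hN hU'
    have hoff : ∀ ζ ∈ N \ {w}, (z, ζ) ∉ S := fun ζ hζ hS => hζ.1.1.2 ⟨hS, hζ.2⟩
    have key := Complex.differentiableOn_update_limUnder_of_bddAbove
      (f := fun ζ => f (z, ζ)) hN'
      (fun ζ hζ => (hfd ζ hζ.1.1.1 (hoff ζ hζ)).differentiableWithinAt)
      ⟨M, by
        rintro _ ⟨ζ, hζ, rfl⟩
        exact hM _ ⟨hζ.1.2, ⟨hz, hζ.1.1.1⟩, hoff ζ hζ⟩⟩
    refine (key.differentiableAt hN').congr_of_eventuallyEq ?_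
    filter_upwards [hN'] with ζ hζ
    rcases eq_or_ne ζ w with rfl | hne
    · simp [fiberExtension, hwS]
    · rw [Function.update_of_ne hne, fiberExtension_of_notMem (hoff ζ ⟨hζ, hne⟩)]
  · refine (hfd w hw hwS).congr_of_eventuallyEq ?_
    filter_upwards [hN] with ζ hζ
    refine fiberExtension_of_notMem fun hS => ?_
    rcases eq_or_ne ζ w with rfl | hne
    · exact hwS hS
    · exact hζ.2 ⟨hS, hne⟩


/-- Removability with finite fibers: let `S` be a relatively closed subset of
`D × V` whose fibers `S_z` are finite, empty for `z` in some set `E ⊆ D`, and with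
connected fiber complements. If `f` is holomorphic on `(D × V) \ S` and bounded
near every point of `S`, then `f` extends holomorphically to `D × V`. -/
theorem extension_across_finite_fibers {n : ℕ} (D : Set (Fin n → ℂ)) (hD : IsOpen D)
    (V : Set ℂ) (hV : IsOpen V)
    (S : Set ((Fin n → ℂ) × ℂ)) (hSsub : S ⊆ D ×ˢ V)
    (hSclosed : closure S ∩ D ×ˢ V ⊆ S)
    (E : Set (Fin n → ℂ)) (hE : E ⊆ D) (hEne : E.Nonempty)
    (hEempty : ∀ z ∈ E, {w : ℂ | (z, w) ∈ S} = ∅)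
    (hfin : ∀ z, {w : ℂ | (z, w) ∈ S}.Finite)
    (hconn : ∀ z ∈ D, IsConnected {w ∈ V | (z, w) ∉ S})
    (f : (Fin n → ℂ) × ℂ → ℂ)
    (hf : DifferentiableOn ℂ f (D ×ˢ V \ S))
    (hbdd : ∀ p ∈ S, ∃ U ∈ nhds p, ∃ M : ℝ, ∀ q ∈ U ∩ (D ×ˢ V \ S), ‖f q‖ ≤ M) :
    ∃ F : (Fin n → ℂ) × ℂ → ℂ,
      DifferentiableOn ℂ F (D ×ˢ V) ∧
      Set.EqOn F f (D ×ˢ V \ S) := by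
  have hΩ : IsOpen (D ×ˢ V \ S) := by
    have : D ×ˢ V \ S = D ×ˢ V \ closure S := by
      ext p
      exact ⟨fun h => ⟨h.1, fun hc => h.2 (hSclosed ⟨hc, h.1⟩)⟩,
        fun h => ⟨h.1, fun hc => h.2 (subset_closure hc)⟩⟩
    rw [this]
    exact (hD.prod hV).sdiff isClosed_closure
  refine ⟨fiberExtension S f, ?_, fun p hp => fiberExtension_of_notMem hp.2⟩
  rintro ⟨z₀, w₀⟩ ⟨hz₀, hw₀⟩
  refine DifferentiableAt.differentiableWithinAt ?_
  have hN : V ∩ ({ζ : ℂ | (z₀, ζ) ∈ S} \ {w₀})ᶜ ∈ 𝓝 w₀ :=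
    inter_mem (hV.mem_nhds hw₀)
      (((hfin z₀).subset sdiff_subset).isClosed.isOpen_compl.mem_nhds fun h => h.2 rfl)
  obtain ⟨r, hr, hrN⟩ := Metric.nhds_basis_closedBall.mem_iff.1 hN
  have hsph : ∀ ζ ∈ sphere w₀ r, (z₀, ζ) ∈ D ×ˢ V \ S := fun ζ hζ =>
    have h := hrN (sphere_subset_closedBall hζ)
    ⟨⟨hz₀, h.1⟩, fun hS => h.2 ⟨hS, ne_of_mem_sphere hζ (ne_of_gt hr)⟩⟩
  -- holomorphy of the Cauchy integral, with parameter `x = (z, w)`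
  let W : Set (((Fin n → ℂ) × ℂ) × ℂ) :=
    (fun q => (q.1.1, q.2)) ⁻¹' (D ×ˢ V \ S) ∩ {q | q.2 - q.1.2 ≠ 0}
  have hW : IsOpen W :=
    (hΩ.preimage (by fun_prop)).inter (isOpen_ne_fun (by fun_prop) (by fun_prop))
  have hg : DifferentiableOn ℂ
      (fun q : ((Fin n → ℂ) × ℂ) × ℂ => (q.2 - q.1.2)⁻¹ • f (q.1.1, q.2)) W := by
    have h1 : DifferentiableOn ℂ
        (fun q : ((Fin n → ℂ) × ℂ) × ℂ => f (q.1.1, q.2)) W :=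
      hf.comp (f := fun q : ((Fin n → ℂ) × ℂ) × ℂ => (q.1.1, q.2)) (by fun_prop)
        fun q hq => hq.1
    have h2 : DifferentiableOn ℂ
        (fun q : ((Fin n → ℂ) × ℂ) × ℂ => (q.2 - q.1.2)⁻¹) W :=
      DifferentiableOn.inv (by fun_prop) fun q hq => hq.2
    exact h2.smul h1
  have hI := (differentiableAt_circleIntegral_param hW hg (x₀ := (z₀, w₀)) hr.le
    fun ζ hζ => ⟨hsph ζ hζ, sub_ne_zero.2 (ne_of_mem_sphere hζ hr.ne')⟩).const_smul
      (2 * Real.pi * Complex.I : ℂ)⁻¹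
  refine hI.congr_of_eventuallyEq ?_
  have hev : ∀ᶠ z in 𝓝 z₀, ∀ ζ ∈ sphere w₀ r, (z, ζ) ∈ D ×ˢ V \ S :=
    (isCompact_sphere w₀ r).eventually_forall_of_forall_eventually
      (P := fun z ζ => (z, ζ) ∈ D ×ˢ V \ S) fun ζ hζ => hΩ.mem_nhds (hsph ζ hζ)
  have hev' : ∀ᶠ p : (Fin n → ℂ) × ℂ in 𝓝 (z₀, w₀),
      ∀ ζ ∈ sphere w₀ r, (p.1, ζ) ∈ D ×ˢ V \ S :=
    (continuous_fst.tendsto (z₀, w₀)).eventually hev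
  filter_upwards [hev', prod_mem_nhds (hD.mem_nhds hz₀) (ball_mem_nhds w₀ hr)]
    with ⟨z, w⟩ hzs ⟨hzD, hwb⟩
  have hd : DifferentiableOn ℂ (fun ζ => fiberExtension S f (z, ζ)) (closedBall w₀ r) :=
    fun ζ hζ => (differentiableAt_fiberExtension hV hΩ hzD (hfin z) hf hbdd
      (hrN hζ).1).differentiableWithinAt
  have hC := hd.circleIntegral_sub_inv_smul hwb
  have hcongr : (∮ ζ in C(w₀, r), (ζ - w)⁻¹ • fiberExtension S f (z, ζ)) =
      ∮ ζ in C(w₀, r), (ζ - w)⁻¹ • f (z, ζ) :=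
    circleIntegral.integral_congr hr.le fun ζ hζ => by
      simp only [fiberExtension_of_notMem (hzs ζ hζ).2]
  rw [hcongr] at hC
  simp only [Pi.smul_apply]
  rw [hC, inv_smul_smul₀ Complex.two_pi_I_ne_zero]
end
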